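/- arXiv:1307.1446 — 3 statements merged into one kernel-verified Lean document; each statement's English description precedes it below -/
import Mathlib

section
/- Let X be a real random variable with X ~ N(μ, σ²) for some μ ∈ ℝ and σ > 0. Then E[min(1, e^X)] = Φ(μ/σ) + exp(μ + σ²/2) · Φ(−σ − μ/σ). -/
/-!
Split the expectation at the sign of `X`: on `X ≥ 0` the integrand is `1`, on `X < 0` it is `e^X`.
The first part is `P(X ≥ 0) = Φ(μ/σ)`, by standardization and symmetry. For the second, completing
the square shows that the `N(μ, σ²)` density times `e^x` is `e^(μ + σ²/2)` times the
`N(μ + σ², σ²)` density (`exp_mul_gaussianPDFReal`), so that part equals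
`e^(μ + σ²/2) · P(Y ≤ 0)` with `Y ~ N(μ + σ², σ²)`, and `P(Y ≤ 0) = Φ(-(μ + σ²)/σ)`.
-/

open MeasureTheory ProbabilityTheory

/-- The cumulative distribution function of the standard normal distribution `N(0,1)`. -/
noncomputable def stdNormalCDF (x : ℝ) : ℝ := cdf (gaussianReal 0 1) x

lemma gaussianReal_real_Iic_zero (m : ℝ) {σ : ℝ} (hσ : 0 < σ) :
    (gaussianReal m (σ ^ 2).toNNReal).real (Set.Iic 0) = stdNormalCDF (-m / σ) := by
  have hmap : (gaussianReal 0 1).map (fun x ↦ m + σ * x) = gaussianReal m (σ ^ 2).toNNReal := by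
    have hcomp : (fun x ↦ m + σ * x) = (fun x ↦ m + x) ∘ (fun x ↦ σ * x) := rfl
    rw [hcomp, ← Measure.map_map (by fun_prop) (by fun_prop), gaussianReal_map_const_mul,
      gaussianReal_map_const_add]
    congr 1
    · simp
    · ext
      simp [sq_nonneg]
  rw [← hmap, map_measureReal_apply (by fun_prop) measurableSet_Iic, stdNormalCDF,
    cdf_eq_real]
  congr 1
  ext x
  simp only [Set.mem_preimage, Set.mem_Iic]
  rw [le_div_iff₀ hσ]
  constructor <;> intro h <;> linarith

lemma gaussianReal_real_Ici_zero (m : ℝ) {σ : ℝ} (hσ : 0 < σ) :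
    (gaussianReal m (σ ^ 2).toNNReal).real (Set.Ici 0) = stdNormalCDF (m / σ) := by
  have h := gaussianReal_real_Iic_zero (-m) hσ
  rw [← gaussianReal_map_neg, map_measureReal_apply (by fun_prop) measurableSet_Iic, neg_neg] at h
  rw [← h]
  congr 1
  ext x
  simp

/-- Exponential tilting of a Gaussian density by `e^x` shifts its mean by the variance. -/
lemma exp_mul_gaussianPDFReal (μ : ℝ) {σ : ℝ} (hσ : 0 < σ) (x : ℝ) :
    gaussianPDFReal μ (σ ^ 2).toNNReal x * Real.exp x
      = Real.exp (μ + σ ^ 2 / 2) * gaussianPDFReal (μ + σ ^ 2) (σ ^ 2).toNNReal x := by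
  have hv : ((σ ^ 2).toNNReal : ℝ) = σ ^ 2 := Real.coe_toNNReal _ (sq_nonneg σ)
  simp only [gaussianPDFReal, hv]
  rw [mul_assoc, ← Real.exp_add, mul_left_comm, ← Real.exp_add]
  congr 2
  field_simp
  ring

lemma setIntegral_exp_gaussianReal (μ : ℝ) {σ : ℝ} (hσ : 0 < σ) {s : Set ℝ}
    (hs : MeasurableSet s) :
    ∫ x in s, Real.exp x ∂gaussianReal μ (σ ^ 2).toNNReal
      = Real.exp (μ + σ ^ 2 / 2) * (gaussianReal (μ + σ ^ 2) (σ ^ 2).toNNReal).real s := by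
  have hv : (σ ^ 2).toNNReal ≠ 0 := (Real.toNNReal_pos.2 (by positivity)).ne'
  rw [← integral_indicator hs, ← integral_indicator_one hs,
    integral_gaussianReal_eq_integral_smul hv, integral_gaussianReal_eq_integral_smul hv,
    ← integral_const_mul]
  congr 1
  ext x
  by_cases hx : x ∈ s
  · simp [hx, exp_mul_gaussianPDFReal μ hσ x]
  · simp [hx]

/-- **Proposition 2.4 of Roberts–Gelman–Gilks.**
If `X ~ N(μ, σ²)` with `σ > 0`, then
`E[min(1, e^X)] = Φ(μ/σ) + exp(μ + σ²/2) · Φ(−σ − μ/σ)`. -/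
theorem expectation_min_one_exp_gaussian
    {Ω : Type*} [MeasurableSpace Ω] (P : Measure Ω) [IsProbabilityMeasure P]
    (X : Ω → ℝ) (hX : Measurable X) (μ σ : ℝ) (hσ : 0 < σ)
    (hlaw : Measure.map X P = gaussianReal μ (σ ^ 2).toNNReal) :
    ∫ ω, min 1 (Real.exp (X ω)) ∂P
      = stdNormalCDF (μ / σ) + Real.exp (μ + σ ^ 2 / 2) * stdNormalCDF (-σ - μ / σ) := by
  have hv : (σ ^ 2).toNNReal ≠ 0 := (Real.toNNReal_pos.2 (by positivity)).ne'
  have := nullSingletonClass_gaussianReal (μ := μ) hv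
  have hmap := integral_map (μ := P) hX.aemeasurable
    (f := fun x ↦ min 1 (Real.exp x)) (by fun_prop)
  rw [← hmap, hlaw]
  have hint : Integrable (fun x ↦ min 1 (Real.exp x)) (gaussianReal μ (σ ^ 2).toNNReal) := by
    refine (integrable_const (1 : ℝ)).mono' (by fun_prop) (ae_of_all _ fun x ↦ ?_)
    rw [Real.norm_of_nonneg (by positivity)]
    exact min_le_left _ _
  have hpos : ∫ x in Set.Ici 0, min 1 (Real.exp x) ∂gaussianReal μ (σ ^ 2).toNNReal
      = stdNormalCDF (μ / σ) := by
    rw [setIntegral_congr_fun (g := fun _ ↦ (1 : ℝ)) measurableSet_Ici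
      fun x hx ↦ min_eq_left (Real.one_le_exp hx)]
    simp [gaussianReal_real_Ici_zero μ hσ]
  have hneg : ∫ x in Set.Iio 0, min 1 (Real.exp x) ∂gaussianReal μ (σ ^ 2).toNNReal
      = Real.exp (μ + σ ^ 2 / 2) * stdNormalCDF (-σ - μ / σ) := by
    rw [← integral_Iic_eq_integral_Iio, setIntegral_congr_fun measurableSet_Iic
      fun x hx ↦ min_eq_right (Real.exp_le_one_iff.2 hx),
      setIntegral_exp_gaussianReal μ hσ measurableSet_Iic, gaussianReal_real_Iic_zero _ hσ]
    congr 2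
    field_simp
    ring
  rw [← integral_add_compl (measurableSet_Ici (a := (0 : ℝ))) hint, Set.compl_Ici, hpos, hneg]
end

section
/- Let σ > 0 and let X be a real random variable with X ~ N(−σ²/2, σ²). Then E[min(1, e^X)] = 2Φ(−σ/2). -/
/-!
Let `p` be the density of `N(-σ²/2, σ²)`. Completing the square gives the reflection identity
`exp x * p x = p (-x)` (`exp_mul_gaussianPDFReal_stationary`). Hence `min 1 (exp x) * p x` equals
`p x` for `x > 0` and `p (-x)` for `x ≤ 0`, so the expectation is twice the mass which
`N(-σ²/2, σ²)` gives to the positive half-line; by the affine change of variables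
`x = -σ²/2 - σ z` that mass is `Φ(-σ/2)` (`gaussianReal_stationary_real_Ici`).
-/

open MeasureTheory ProbabilityTheory

lemma exp_mul_gaussianPDFReal_stationary {σ : ℝ} (hσ : 0 < σ) (x : ℝ) :
    Real.exp x * gaussianPDFReal (-(σ ^ 2) / 2) (σ ^ 2).toNNReal x =
      gaussianPDFReal (-(σ ^ 2) / 2) (σ ^ 2).toNNReal (-x) := by
  simp only [gaussianPDFReal, Real.coe_toNNReal _ (sq_nonneg σ)]
  rw [mul_left_comm, ← Real.exp_add]
  congr 2
  field_simp
  ring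

lemma gaussianReal_stationary_real_Ici {σ : ℝ} (hσ : 0 < σ) :
    (gaussianReal (-(σ ^ 2) / 2) (σ ^ 2).toNNReal).real (Set.Ici 0) = stdNormalCDF (-σ / 2) := by
  have hmap : (gaussianReal 0 1).map (fun z ↦ -(σ ^ 2) / 2 - σ * z) =
      gaussianReal (-(σ ^ 2) / 2) (σ ^ 2).toNNReal := by
    have hcomp : (fun z : ℝ ↦ -(σ ^ 2) / 2 - σ * z) =
        (fun y ↦ -(σ ^ 2) / 2 - y) ∘ (fun z ↦ σ * z) := rfl
    rw [hcomp, ← Measure.map_map (by fun_prop) (by fun_prop), gaussianReal_map_const_mul,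
      gaussianReal_map_const_sub]
    congr 1
    · simp
    · ext
      simp [sq_nonneg σ]
  have hpre : (fun z : ℝ ↦ -(σ ^ 2) / 2 - σ * z) ⁻¹' Set.Ici 0 = Set.Iic (-σ / 2) := by
    ext z
    simp only [Set.mem_preimage, Set.mem_Ici, Set.mem_Iic]
    constructor <;> intro h <;> nlinarith
  rw [← hmap, map_measureReal_apply (by fun_prop) measurableSet_Ici, hpre, stdNormalCDF,
    cdf_eq_real]

/-- If `X ~ N(−σ²/2, σ²)` with `σ > 0`, then `E[min(1, e^X)] = 2Φ(−σ/2)`. -/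
theorem expectation_min_one_exp_gaussian_stationary
    {Ω : Type*} [MeasurableSpace Ω] (P : Measure Ω) [IsProbabilityMeasure P]
    (X : Ω → ℝ) (hX : Measurable X) (σ : ℝ) (hσ : 0 < σ)
    (hlaw : Measure.map X P = gaussianReal (-(σ ^ 2) / 2) (σ ^ 2).toNNReal) :
    ∫ ω, min 1 (Real.exp (X ω)) ∂P = 2 * stdNormalCDF (-σ / 2) := by
  have hv : (σ ^ 2).toNNReal ≠ 0 := by
    simp [hσ.ne']
  have hpush : ∫ ω, min 1 (Real.exp (X ω)) ∂P =
      ∫ x, min 1 (Real.exp x) ∂(Measure.map X P) :=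
    (integral_map (f := fun x ↦ min 1 (Real.exp x)) hX.aemeasurable
      (by fun_prop)).symm
  rw [hpush, hlaw, integral_gaussianReal_eq_integral_smul hv,
    ← gaussianReal_stationary_real_Ici hσ, measureReal_def, gaussianReal_apply_eq_integral _ hv]
  have hrefl := exp_mul_gaussianPDFReal_stationary hσ
  have hint := integrable_gaussianPDFReal (-(σ ^ 2) / 2) (σ ^ 2).toNNReal
  have hnonneg := gaussianPDFReal_nonneg (-(σ ^ 2) / 2) (σ ^ 2).toNNReal
  generalize gaussianPDFReal (-(σ ^ 2) / 2) (σ ^ 2).toNNReal = p at *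
  rw [ENNReal.toReal_ofReal (integral_nonneg hnonneg), integral_Ici_eq_integral_Ioi]
  have hIic : Set.EqOn (fun x ↦ p x • min 1 (Real.exp x)) (fun x ↦ p (-x)) (Set.Iic 0) := by
    intro x hx
    simp only [smul_eq_mul]
    rw [min_eq_right (Real.exp_le_one_iff.2 hx), mul_comm, hrefl]
  have hIoi : Set.EqOn (fun x ↦ p x • min 1 (Real.exp x)) p (Set.Ioi 0) := by
    intro x hx
    simp only [smul_eq_mul]
    rw [min_eq_left (Real.one_le_exp (le_of_lt hx)), mul_one]
  have hintIic : IntegrableOn (fun x ↦ p x • min 1 (Real.exp x)) (Set.Iic 0) :=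
    hint.comp_neg.integrableOn.congr_fun hIic.symm measurableSet_Iic
  have hintIoi : IntegrableOn (fun x ↦ p x • min 1 (Real.exp x)) (Set.Ioi 0) :=
    hint.integrableOn.congr_fun hIoi.symm measurableSet_Ioi
  rw [← intervalIntegral.integral_Iic_add_Ioi hintIic hintIoi,
    setIntegral_congr_fun measurableSet_Iic hIic, setIntegral_congr_fun measurableSet_Ioi hIoi,
    integral_comp_neg_Iic, neg_zero, two_mul]
end

section
/- Define G(a) = 4a² ∫₀^∞ u² Φ(−au/2) φ(u) du and A(a) = 4 ∫₀^∞ Φ(−au/2) φ(u) du for a > 0. Then there exists a* ∈ [2.4255, 2.4265] such that G(a*) ≥ G(a) for all a > 0, and for this a*, A(a*) ∈ [0.4385, 0.4395]. -/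
/-!
Both integrals have closed forms. With `c = a / 2`,
`∫₀^∞ Φ(-cu) φ(u) du = 1/4 - arctan c / (2π)` and
`∫₀^∞ u² Φ(-cu) φ(u) du = 1/4 - (arctan c + c / (1 + c²)) / (2π)`:
differentiating under the integral sign in `a` leaves an elementary Gaussian moment, and both sides
agree at `a = 0` because `Φ(0) = 1/2`. Hence `G(a) = (8/π) h(c)` with
`h(c) = c² (π/2 - arctan c - c / (1 + c²))`, and `h'(c) = 2 c m(c)` where
`m(c) = π/2 - arctan c - c / (1 + c²) - c / (1 + c²)²`.

Since `m'(c) = (c² - 3) / (1 + c²)³`, the function `m` decreases on `[0, √3]` and then increases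
towards its limit `0`; so it has a single sign change on `(0, ∞)`, at the maximizer of `h`.
Evaluating `m` at `1.21275` and `1.21325` locates the sign change. The values of `arctan` there come
from `arctan c = π/4 + arctan ((c - 1) / (c + 1))` and Taylor bounds at the small argument; the same
bounds give the acceptance rate `A(a) = 1 - (2/π) arctan c`.
-/

open MeasureTheory ProbabilityTheory

/-- The standard normal density `φ`. -/
noncomputable def stdNormalPDF (x : ℝ) : ℝ := gaussianPDFReal 0 1 x

/-- The additive-TMCMC diffusion speed in the i.i.d. set-up, in the scaled variable
`a = ℓ√I`: `G(a) = 4a² ∫₀^∞ u² Φ(−au/2) φ(u) du`. -/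
noncomputable def tmcmcSpeed (a : ℝ) : ℝ :=
  4 * a ^ 2 * ∫ u in Set.Ioi (0 : ℝ), u ^ 2 * stdNormalCDF (-(a * u) / 2) * stdNormalPDF u

/-- The limiting acceptance rate `A(a) = 4 ∫₀^∞ Φ(−au/2) φ(u) du`. -/
noncomputable def tmcmcAcceptance (a : ℝ) : ℝ :=
  4 * ∫ u in Set.Ioi (0 : ℝ), stdNormalCDF (-(a * u) / 2) * stdNormalPDF u

/-! ### The standard normal distribution -/

lemma stdNormalPDF_eq (x : ℝ) :
    stdNormalPDF x = (√(2 * Real.pi))⁻¹ * Real.exp (-(1 / 2) * x ^ 2) := by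
  simp only [stdNormalPDF, gaussianPDFReal, NNReal.coe_one, sub_zero, mul_one]
  congr 2
  ring

lemma continuous_stdNormalPDF : Continuous stdNormalPDF := by
  rw [funext stdNormalPDF_eq]
  fun_prop

lemma integrable_stdNormalPDF : Integrable stdNormalPDF :=
  integrable_gaussianPDFReal 0 1

lemma stdNormalPDF_nonneg (x : ℝ) : 0 ≤ stdNormalPDF x := gaussianPDFReal_nonneg 0 1 x

lemma stdNormalPDF_le_one (x : ℝ) : stdNormalPDF x ≤ 1 := by
  rw [stdNormalPDF_eq]
  have h1 : (√(2 * Real.pi))⁻¹ ≤ 1 := by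
    apply inv_le_one_of_one_le₀
    rw [Real.one_le_sqrt]
    linarith [Real.pi_gt_three]
  have h2 : Real.exp (-(1 / 2) * x ^ 2) ≤ 1 := by
    rw [Real.exp_le_one_iff]
    nlinarith [sq_nonneg x]
  exact mul_le_one₀ h1 (Real.exp_pos _).le h2

lemma stdNormalCDF_eq_integral (x : ℝ) :
    stdNormalCDF x = ∫ t in Set.Iic x, stdNormalPDF t := by
  rw [stdNormalCDF, cdf_eq_real, measureReal_def, gaussianReal_apply_eq_integral 0 one_ne_zero,
    ENNReal.toReal_ofReal]
  · rfl
  · exact integral_nonneg fun t => stdNormalPDF_nonneg t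

lemma stdNormalCDF_zero : stdNormalCDF 0 = 1 / 2 := by
  have hsymm : ∫ t in Set.Iic (0 : ℝ), stdNormalPDF t = ∫ t in Set.Ioi (0 : ℝ), stdNormalPDF t := by
    have := integral_comp_neg_Iic (0 : ℝ) stdNormalPDF
    rw [neg_zero] at this
    rw [← this]
    simp [stdNormalPDF_eq]
  have htot : (∫ t in Set.Iic (0 : ℝ), stdNormalPDF t) + ∫ t in Set.Ioi (0 : ℝ), stdNormalPDF t
      = 1 := by
    rw [intervalIntegral.integral_Iic_add_Ioi integrable_stdNormalPDF.integrableOn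
      integrable_stdNormalPDF.integrableOn]
    exact integral_gaussianPDFReal_eq_one 0 one_ne_zero
  rw [stdNormalCDF_eq_integral]
  linarith

lemma hasDerivAt_stdNormalCDF (x : ℝ) : HasDerivAt stdNormalCDF (stdNormalPDF x) x := by
  have h : stdNormalCDF = fun y => stdNormalCDF 0 + ∫ t in (0 : ℝ)..y, stdNormalPDF t := by
    funext y
    rw [stdNormalCDF_eq_integral, stdNormalCDF_eq_integral,
      ← intervalIntegral.integral_Iic_sub_Iic integrable_stdNormalPDF.integrableOn
        integrable_stdNormalPDF.integrableOn]
    ring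
  rw [h]
  exact (intervalIntegral.integral_hasDerivAt_right
    (continuous_stdNormalPDF.intervalIntegrable _ _)
    (continuous_stdNormalPDF.stronglyMeasurableAtFilter _ _)
    continuous_stdNormalPDF.continuousAt).const_add _

lemma continuous_stdNormalCDF : Continuous stdNormalCDF :=
  continuous_iff_continuousAt.2 fun x => (hasDerivAt_stdNormalCDF x).continuousAt

lemma abs_stdNormalCDF_le_one (x : ℝ) : |stdNormalCDF x| ≤ 1 := by
  rw [stdNormalCDF, abs_of_nonneg (cdf_nonneg _ x)]
  exact cdf_le_one _ x

/-! ### Closed forms of the two integrals -/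

lemma integrableOn_pow_mul_exp (n : ℕ) {b : ℝ} (hb : 0 < b) :
    IntegrableOn (fun u : ℝ => u ^ n * Real.exp (-b * u ^ 2)) (Set.Ioi 0) := by
  have := integrableOn_rpow_mul_exp_neg_mul_sq hb (s := n) (by linarith [n.cast_nonneg (α := ℝ)])
  simpa [Real.rpow_natCast] using this

lemma integral_pow_mul_exp (n : ℕ) {b : ℝ} (hb : 0 < b) :
    ∫ u in Set.Ioi (0 : ℝ), u ^ n * Real.exp (-b * u ^ 2) =
      b ^ (-((n : ℝ) + 1) / 2) * (1 / 2) * Real.Gamma (((n : ℝ) + 1) / 2) := by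
  have := integral_rpow_mul_exp_neg_mul_rpow (p := 2) (q := n) two_pos
    (by linarith [n.cast_nonneg (α := ℝ)]) hb
  rw [← this]
  norm_cast

lemma integrableOn_pow_mul_pdf (n : ℕ) :
    IntegrableOn (fun u : ℝ => u ^ n * stdNormalPDF u) (Set.Ioi 0) := by
  have := (integrableOn_pow_mul_exp n (b := 1 / 2) (by norm_num)).const_mul (√(2 * Real.pi))⁻¹
  refine IntegrableOn.congr_fun this (fun u _ => ?_) measurableSet_Ioi
  simp only [stdNormalPDF_eq]
  ring

/-- Differentiation under the integral sign; the `a`-derivative of the integrand is dominated by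
`u ^ (n + 1) * φ u`. -/
lemma hasDerivAt_moment (n : ℕ) (a : ℝ) :
    HasDerivAt (fun a : ℝ => ∫ u in Set.Ioi (0 : ℝ),
        u ^ n * stdNormalCDF (-(a * u) / 2) * stdNormalPDF u)
      (-(1 / (4 * Real.pi)) *
        ∫ u in Set.Ioi (0 : ℝ), u ^ (n + 1) * Real.exp (-((1 + (a / 2) ^ 2) / 2) * u ^ 2)) a := by
  have hmeas : ∀ x : ℝ, AEStronglyMeasurable
      (fun u : ℝ => u ^ n * stdNormalCDF (-(x * u) / 2) * stdNormalPDF u)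
      (volume.restrict (Set.Ioi 0)) := fun x =>
    (((continuous_id.pow n).mul (continuous_stdNormalCDF.comp (by fun_prop))).mul
      continuous_stdNormalPDF).aestronglyMeasurable
  have key := hasDerivAt_integral_of_dominated_loc_of_deriv_le (𝕜 := ℝ)
    (μ := volume.restrict (Set.Ioi (0 : ℝ))) (x₀ := a) (s := Set.univ)
    (F := fun a u => u ^ n * stdNormalCDF (-(a * u) / 2) * stdNormalPDF u)
    (F' := fun a u => u ^ n * (stdNormalPDF (-(a * u) / 2) * (-u / 2)) * stdNormalPDF u)
    (bound := fun u => u ^ (n + 1) * stdNormalPDF u)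
    Filter.univ_mem (Filter.Eventually.of_forall hmeas) ?_ ?_ ?_ (integrableOn_pow_mul_pdf (n + 1))
    ?_
  · convert! key.2 using 1
    rw [← integral_const_mul]
    refine setIntegral_congr_fun measurableSet_Ioi fun u _ => ?_
    have hs : (√(2 * Real.pi))⁻¹ * (√(2 * Real.pi))⁻¹ = 1 / (2 * Real.pi) := by
      rw [← mul_inv, Real.mul_self_sqrt (by positivity), one_div]
    have he : Real.exp (-(1 / 2) * (-(a * u) / 2) ^ 2) * Real.exp (-(1 / 2) * u ^ 2) =
        Real.exp (-((1 + (a / 2) ^ 2) / 2) * u ^ 2) := by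
      rw [← Real.exp_add]
      congr 1
      ring
    simp only [stdNormalPDF_eq]
    calc _ = -(1 / 2) * (1 / (2 * Real.pi)) *
          (u ^ (n + 1) * Real.exp (-((1 + (a / 2) ^ 2) / 2) * u ^ 2)) := by ring
      _ = _ := by rw [← hs, ← he]; ring
  · refine Integrable.mono (integrableOn_pow_mul_pdf n) (hmeas a) (Filter.Eventually.of_forall fun u => ?_)
    simp only [norm_mul, Real.norm_eq_abs]
    have := abs_stdNormalCDF_le_one (-(a * u) / 2)
    gcongr
    exact mul_le_of_le_one_right (abs_nonneg _) this
  · exact (((continuous_id.pow n).mul ((continuous_stdNormalPDF.comp (by fun_prop)).mul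
      (by fun_prop))).mul continuous_stdNormalPDF).aestronglyMeasurable
  · filter_upwards [ae_restrict_mem measurableSet_Ioi] with u hu x _
    have hu : 0 < u := hu
    have h1 := stdNormalPDF_le_one (-(x * u) / 2)
    have h0 := stdNormalPDF_nonneg (-(x * u) / 2)
    have h2 := stdNormalPDF_nonneg u
    rw [Real.norm_eq_abs, abs_mul, abs_mul, abs_mul, abs_of_nonneg h0, abs_of_nonneg h2,
      abs_of_pos (pow_pos hu n), abs_of_neg (by linarith : -u / 2 < 0), pow_succ]
    gcongr
    nlinarith
  · refine Filter.Eventually.of_forall fun u x _ => ?_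
    have h1 : HasDerivAt (fun y : ℝ => -(y * u) / 2) (-u / 2) x := by
      simpa using (((hasDerivAt_id x).mul_const u).neg.div_const 2)
    exact (((hasDerivAt_stdNormalCDF _).comp x h1).const_mul (u ^ n)).mul_const _

lemma hasDerivAt_arctan_half (a : ℝ) :
    HasDerivAt (fun a : ℝ => Real.arctan (a / 2)) (1 / (1 + (a / 2) ^ 2) * (1 / 2)) a :=
  ((hasDerivAt_id a).div_const 2).arctan

lemma integral_cdf_mul_pdf (a : ℝ) :
    ∫ u in Set.Ioi (0 : ℝ), stdNormalCDF (-(a * u) / 2) * stdNormalPDF u =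
      1 / 4 - Real.arctan (a / 2) / (2 * Real.pi) := by
  have hd : ∀ x : ℝ, HasDerivAt (fun a : ℝ => (∫ u in Set.Ioi (0 : ℝ),
      u ^ 0 * stdNormalCDF (-(a * u) / 2) * stdNormalPDF u) +
        Real.arctan (a / 2) / (2 * Real.pi)) 0 x := by
    intro x
    have hb : 0 < (1 + (x / 2) ^ 2) / 2 := by positivity
    convert! (hasDerivAt_moment 0 x).add ((hasDerivAt_arctan_half x).div_const (2 * Real.pi)) using 1
    have h1 : -(((0 + 1 : ℕ) : ℝ) + 1) / 2 = ((-1 : ℤ) : ℝ) := by norm_num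
    have h2 : (((0 + 1 : ℕ) : ℝ) + 1) / 2 = 1 := by norm_num
    rw [integral_pow_mul_exp _ hb, h1, h2, Real.rpow_intCast, Real.Gamma_one, zpow_neg_one]
    field_simp
    ring
  have hc := is_const_of_deriv_eq_zero (fun x => (hd x).differentiableAt)
    (fun x => (hd x).deriv) a 0
  have h0 : ∫ u in Set.Ioi (0 : ℝ), stdNormalPDF u = 1 / 2 := by
    have htot := intervalIntegral.integral_Iic_add_Ioi (b := 0)
      integrable_stdNormalPDF.integrableOn integrable_stdNormalPDF.integrableOn
    have : ∫ u, stdNormalPDF u = 1 := integral_gaussianPDFReal_eq_one 0 one_ne_zero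
    rw [← stdNormalCDF_eq_integral, stdNormalCDF_zero, this] at htot
    linarith
  simp [stdNormalCDF_zero, integral_const_mul, h0] at hc
  linarith

lemma integral_sq_mul_cdf_mul_pdf (a : ℝ) :
    ∫ u in Set.Ioi (0 : ℝ), u ^ 2 * stdNormalCDF (-(a * u) / 2) * stdNormalPDF u =
      1 / 4 - (Real.arctan (a / 2) + a / 2 / (1 + (a / 2) ^ 2)) / (2 * Real.pi) := by
  have hd : ∀ x : ℝ, HasDerivAt (fun a : ℝ => (∫ u in Set.Ioi (0 : ℝ),
      u ^ 2 * stdNormalCDF (-(a * u) / 2) * stdNormalPDF u) +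
        (Real.arctan (a / 2) + a / 2 / (1 + (a / 2) ^ 2)) / (2 * Real.pi)) 0 x := by
    intro x
    have hb : 0 < (1 + (x / 2) ^ 2) / 2 := by positivity
    have hx : HasDerivAt (fun a : ℝ => a / 2) (1 / 2) x := (hasDerivAt_id x).div_const 2
    have hq := hx.div ((hx.pow 2).const_add 1) (show 1 + (x / 2) ^ 2 ≠ 0 by positivity)
    convert! (hasDerivAt_moment 2 x).add
      (((hasDerivAt_arctan_half x).add hq).div_const (2 * Real.pi)) using 1
    have h1 : -(((2 + 1 : ℕ) : ℝ) + 1) / 2 = ((-2 : ℤ) : ℝ) := by norm_num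
    have h2 : (((2 + 1 : ℕ) : ℝ) + 1) / 2 = 2 := by norm_num
    rw [integral_pow_mul_exp _ hb, h1, h2, Real.rpow_intCast, Real.Gamma_two, zpow_neg]
    have : (1 + (x / 2) ^ 2) ≠ 0 := by positivity
    norm_cast
    simp only [Pi.pow_apply]
    field_simp
    ring
  have hc := is_const_of_deriv_eq_zero (fun x => (hd x).differentiableAt)
    (fun x => (hd x).deriv) a 0
  have h0 : ∫ u in Set.Ioi (0 : ℝ), u ^ 2 * stdNormalPDF u = 1 / 2 := by
    have h1 : -(((2 : ℕ) : ℝ) + 1) / 2 = -(3 / 2) := by norm_num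
    have h2 : (((2 : ℕ) : ℝ) + 1) / 2 = 1 / 2 + 1 := by norm_num
    have h3 := integral_pow_mul_exp 2 (b := 1 / 2) (by norm_num)
    have h4 : (1 / 2 : ℝ) ^ (-(3 / 2) : ℝ) = 2 * √2 := by
      rw [one_div, Real.inv_rpow two_pos.le, Real.rpow_neg two_pos.le, inv_inv, Real.sqrt_eq_rpow,
        show (3 / 2 : ℝ) = 1 + 1 / 2 by norm_num, Real.rpow_add two_pos, Real.rpow_one]
    rw [h1, h2, Real.Gamma_add_one (by norm_num), Real.Gamma_one_half_eq, h4] at h3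
    have h5 : ∀ u : ℝ, u ^ 2 * stdNormalPDF u =
        (√(2 * Real.pi))⁻¹ * (u ^ 2 * Real.exp (-(1 / 2) * u ^ 2)) := fun u => by
      rw [stdNormalPDF_eq]; ring
    simp_rw [h5]
    rw [integral_const_mul, h3, Real.sqrt_mul two_pos.le]
    have := Real.sqrt_pos.2 Real.pi_pos
    field_simp
  have h6 : ∀ u : ℝ, u ^ 2 * (1 / 2) * stdNormalPDF u = 1 / 2 * (u ^ 2 * stdNormalPDF u) :=
    fun u => by ring
  simp only [zero_mul, neg_zero, zero_div, stdNormalCDF_zero, h6, integral_const_mul, h0,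
    Real.arctan_zero] at hc
  norm_num at hc ⊢
  linarith

/-! ### The profile of the speed function -/

/-- The speed up to the factor `8 / π`, in the variable `c = a / 2`. -/
noncomputable def speedProfile (c : ℝ) : ℝ :=
  c ^ 2 * (Real.pi / 2 - Real.arctan c - c / (1 + c ^ 2))

/-- The factor `m` in the derivative `2 * c * m c` of `speedProfile`. -/
noncomputable def speedSlope (c : ℝ) : ℝ :=
  Real.pi / 2 - Real.arctan c - c / (1 + c ^ 2) - c / (1 + c ^ 2) ^ 2

lemma tmcmcSpeed_eq (a : ℝ) : tmcmcSpeed a = 8 / Real.pi * speedProfile (a / 2) := by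
  rw [tmcmcSpeed, integral_sq_mul_cdf_mul_pdf, speedProfile]
  have : (1 + (a / 2) ^ 2) ≠ 0 := by positivity
  field_simp
  ring

lemma tmcmcAcceptance_eq (a : ℝ) :
    tmcmcAcceptance a = 1 - 2 / Real.pi * Real.arctan (a / 2) := by
  rw [tmcmcAcceptance, integral_cdf_mul_pdf]
  field_simp
  ring

lemma hasDerivAt_speedProfile (c : ℝ) :
    HasDerivAt speedProfile (2 * c * speedSlope c) c := by
  have hp : (1 + c ^ 2) ≠ 0 := by positivity
  have hx := hasDerivAt_id c
  have hq := hx.div ((hx.pow 2).const_add 1) hp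
  have h := (hx.pow 2).mul (((hasDerivAt_const c (Real.pi / 2)).sub (Real.hasDerivAt_arctan c)).sub hq)
  convert! h using 1
  simp only [speedSlope, Pi.pow_apply, Pi.sub_apply, Pi.div_apply, id]
  field_simp
  ring

lemma hasDerivAt_speedSlope (c : ℝ) :
    HasDerivAt speedSlope ((c ^ 2 - 3) / (1 + c ^ 2) ^ 3) c := by
  have hp : (1 + c ^ 2) ≠ 0 := by positivity
  have hx := hasDerivAt_id c
  have hq := hx.div ((hx.pow 2).const_add 1) hp
  have hr := hx.div (((hx.pow 2).const_add 1).pow 2) (pow_ne_zero 2 hp)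
  have h := (((hasDerivAt_const c (Real.pi / 2)).sub (Real.hasDerivAt_arctan c)).sub hq).sub hr
  convert! h using 1
  simp only [Pi.pow_apply, id]
  field_simp
  ring

lemma speedSlope_antitoneOn : AntitoneOn speedSlope (Set.Icc 0 (√3)) := by
  refine antitoneOn_of_deriv_nonpos (convex_Icc _ _)
    (fun x _ => (hasDerivAt_speedSlope x).continuousAt.continuousWithinAt)
    (fun x _ => (hasDerivAt_speedSlope x).differentiableAt.differentiableWithinAt) fun x hx => ?_
  rw [interior_Icc] at hx
  rw [(hasDerivAt_speedSlope x).deriv]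
  have := (Real.lt_sqrt hx.1.le).1 hx.2
  exact div_nonpos_of_nonpos_of_nonneg (by linarith) (by positivity)

lemma speedSlope_monotoneOn : MonotoneOn speedSlope (Set.Ici (√3)) := by
  refine monotoneOn_of_deriv_nonneg (convex_Ici _)
    (fun x _ => (hasDerivAt_speedSlope x).continuousAt.continuousWithinAt)
    (fun x _ => (hasDerivAt_speedSlope x).differentiableAt.differentiableWithinAt) fun x hx => ?_
  rw [interior_Ici] at hx
  rw [(hasDerivAt_speedSlope x).deriv]
  have := (Real.sqrt_lt' ((Real.sqrt_nonneg 3).trans_lt hx)).1 hx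
  exact div_nonneg (by linarith) (by positivity)

/-- `speedSlope` increases on `[√3, ∞)` and is bounded there by `π/2 - arctan`, which tends
to `0`. -/
lemma speedSlope_nonpos_of_sqrt_three_le {c : ℝ} (hc : √3 ≤ c) : speedSlope c ≤ 0 := by
  have hlim : Filter.Tendsto (fun x : ℝ => Real.pi / 2 - Real.arctan x) Filter.atTop (nhds 0) := by
    have := (tendsto_const_nhds (x := Real.pi / 2)).sub
      (Real.tendsto_arctan_atTop.mono_right nhdsWithin_le_nhds)
    simpa using this
  refine ge_of_tendsto hlim ?_
  filter_upwards [Filter.eventually_ge_atTop c] with x hx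
  have hx0 : 0 ≤ x := (Real.sqrt_nonneg 3).trans (hc.trans hx)
  have h1 := speedSlope_monotoneOn hc (hc.trans hx) hx
  have h2 : 0 ≤ x / (1 + x ^ 2) := by positivity
  have h3 : 0 ≤ x / (1 + x ^ 2) ^ 2 := by positivity
  rw [speedSlope.eq_def x] at h1
  linarith

/-- A zero of `speedSlope` in `[0, √3]` maximizes `speedProfile` over `[0, ∞)`. -/
lemma speedProfile_le_of_slope_eq_zero {c : ℝ} (hc : c ∈ Set.Icc 0 (√3)) (h0 : speedSlope c = 0)
    {x : ℝ} (hx : 0 ≤ x) : speedProfile x ≤ speedProfile c := by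
  rcases le_total x c with hxc | hxc
  · have hmono : MonotoneOn speedProfile (Set.Icc 0 c) := by
      refine monotoneOn_of_deriv_nonneg (convex_Icc _ _)
        (fun y _ => (hasDerivAt_speedProfile y).continuousAt.continuousWithinAt)
        (fun y _ => (hasDerivAt_speedProfile y).differentiableAt.differentiableWithinAt)
        fun y hy => ?_
      rw [interior_Icc] at hy
      rw [(hasDerivAt_speedProfile y).deriv]
      have := speedSlope_antitoneOn ⟨hy.1.le, hy.2.le.trans hc.2⟩ hc hy.2.le
      rw [h0] at this
      exact mul_nonneg (by linarith [hy.1]) this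
    exact hmono ⟨hx, hxc⟩ ⟨hc.1, le_rfl⟩ hxc
  · have hanti : AntitoneOn speedProfile (Set.Ici c) := by
      refine antitoneOn_of_deriv_nonpos (convex_Ici _)
        (fun y _ => (hasDerivAt_speedProfile y).continuousAt.continuousWithinAt)
        (fun y _ => (hasDerivAt_speedProfile y).differentiableAt.differentiableWithinAt)
        fun y hy => ?_
      rw [interior_Ici] at hy
      have hy : c < y := hy
      rw [(hasDerivAt_speedProfile y).deriv]
      refine mul_nonpos_of_nonneg_of_nonpos (by linarith [hc.1]) ?_
      rcases le_total y (√3) with hy3 | hy3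
      · have := speedSlope_antitoneOn hc ⟨hc.1.trans hy.le, hy3⟩ hy.le
        rwa [h0] at this
      · exact speedSlope_nonpos_of_sqrt_three_le hy3
    exact hanti (Set.mem_Ici.2 le_rfl) hxc hxc

/-! ### Numerical bounds -/

lemma arctan_lower {y : ℝ} (hy : 0 ≤ y) : y - y ^ 3 / 3 ≤ Real.arctan y := by
  have hd : ∀ x : ℝ, HasDerivAt (fun x : ℝ => Real.arctan x - (x - x ^ 3 / 3))
      (1 / (1 + x ^ 2) - (1 - 3 * x ^ 2 / 3)) x := fun x => by
    convert! (Real.hasDerivAt_arctan x).sub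
      ((hasDerivAt_id x).sub ((hasDerivAt_pow 3 x).div_const 3)) using 1
  have hm : Monotone (fun x : ℝ => Real.arctan x - (x - x ^ 3 / 3)) := by
    refine monotone_of_deriv_nonneg (fun x => (hd x).differentiableAt) fun x => ?_
    have he : 1 / (1 + x ^ 2) - (1 - 3 * x ^ 2 / 3) = x ^ 4 / (1 + x ^ 2) := by
      field_simp
      ring
    rw [(hd x).deriv, he]
    positivity
  have := hm hy
  norm_num at this
  linarith

lemma arctan_upper {y : ℝ} (hy : 0 ≤ y) : Real.arctan y ≤ y - y ^ 3 / 3 + y ^ 5 / 5 := by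
  have hd : ∀ x : ℝ, HasDerivAt (fun x : ℝ => x - x ^ 3 / 3 + x ^ 5 / 5 - Real.arctan x)
      (1 - 3 * x ^ 2 / 3 + 5 * x ^ 4 / 5 - 1 / (1 + x ^ 2)) x := fun x => by
    convert! (((hasDerivAt_id x).sub ((hasDerivAt_pow 3 x).div_const 3)).add
      ((hasDerivAt_pow 5 x).div_const 5)).sub (Real.hasDerivAt_arctan x) using 1
  have hm : Monotone (fun x : ℝ => x - x ^ 3 / 3 + x ^ 5 / 5 - Real.arctan x) := by
    refine monotone_of_deriv_nonneg (fun x => (hd x).differentiableAt) fun x => ?_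
    have he : 1 - 3 * x ^ 2 / 3 + 5 * x ^ 4 / 5 - 1 / (1 + x ^ 2) = x ^ 6 / (1 + x ^ 2) := by
      field_simp
      ring
    rw [(hd x).deriv, he]
    positivity
  have := hm hy
  norm_num at this
  linarith

/-- Reduction of the argument by the angle `π / 4 = arctan 1`. -/
lemma arctan_eq_pi_div_four_add {c : ℝ} (hc : 0 < c) :
    Real.arctan c = Real.pi / 4 + Real.arctan ((c - 1) / (c + 1)) := by
  have h : 1 * ((c - 1) / (c + 1)) < 1 := by
    rw [one_mul, div_lt_one (by linarith)]
    linarith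
  rw [← Real.arctan_one, Real.arctan_add h]
  congr 1
  have : 1 - 1 * ((c - 1) / (c + 1)) ≠ 0 := by linarith
  field_simp
  ring

-- The Taylor error at the argument `≈ 0.096` is below `2e-6`, while the slope at `1.21325`
-- is about `-5e-6`.
lemma arctan_right : Real.pi / 4 + 0.096052 ≤ Real.arctan 1.21325 := by
  rw [arctan_eq_pi_div_four_add (by norm_num)]
  have := arctan_lower (y := (1.21325 - 1) / (1.21325 + 1)) (by norm_num)
  norm_num at this ⊢
  linarith

lemma arctan_left : Real.arctan 1.21275 ≤ Real.pi / 4 + 0.095855 := by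
  rw [arctan_eq_pi_div_four_add (by norm_num)]
  have := arctan_upper (y := (1.21275 - 1) / (1.21275 + 1)) (by norm_num)
  norm_num at this ⊢
  linarith

lemma arctan_right_upper : Real.arctan 1.21325 ≤ Real.pi / 4 + 0.0962 := by
  rw [arctan_eq_pi_div_four_add (by norm_num)]
  have := arctan_upper (y := (1.21325 - 1) / (1.21325 + 1)) (by norm_num)
  norm_num at this ⊢
  linarith

lemma arctan_left_lower : Real.pi / 4 + 0.0958 ≤ Real.arctan 1.21275 := by
  rw [arctan_eq_pi_div_four_add (by norm_num)]
  have := arctan_lower (y := (1.21275 - 1) / (1.21275 + 1)) (by norm_num)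
  norm_num at this ⊢
  linarith

lemma speedSlope_left_nonneg : 0 ≤ speedSlope 1.21275 := by
  have h1 := arctan_left
  have h2 := Real.pi_gt_d6
  rw [speedSlope]
  norm_num at h1 h2 ⊢
  linarith

lemma speedSlope_right_nonpos : speedSlope 1.21325 ≤ 0 := by
  have h1 := arctan_right
  have h2 := Real.pi_lt_d6
  rw [speedSlope]
  norm_num at h1 h2 ⊢
  linarith

/-- **Corollary 1 (optimal scaling of additive TMCMC).** There is a maximizer
`a* ∈ [2.4255, 2.4265]` of `G` over `(0,∞)`, and at this maximizer the acceptance rate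
`A(a*)` lies in `[0.4385, 0.4395]` (i.e. equals `0.439` to three decimal places). -/
theorem tmcmc_optimal_scaling :
    ∃ a : ℝ, a ∈ Set.Icc (2.4255 : ℝ) 2.4265 ∧
      (∀ b : ℝ, 0 < b → tmcmcSpeed b ≤ tmcmcSpeed a) ∧
      tmcmcAcceptance a ∈ Set.Icc (0.4385 : ℝ) 0.4395 := by
  have hcont : ContinuousOn speedSlope (Set.Icc 1.21275 1.21325) := fun x _ =>
    (hasDerivAt_speedSlope x).continuousAt.continuousWithinAt
  obtain ⟨c, ⟨hc1, hc2⟩, hc0⟩ := intermediate_value_Icc' (by norm_num) hcont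
    ⟨speedSlope_right_nonpos, speedSlope_left_nonneg⟩
  have hac : 2 * c / 2 = c := by ring
  refine ⟨2 * c, ⟨by linarith, by linarith⟩, fun b hb => ?_, ?_⟩
  · rw [tmcmcSpeed_eq, tmcmcSpeed_eq, hac]
    have h3 : c ≤ √3 := Real.le_sqrt_of_sq_le (by nlinarith)
    have := speedProfile_le_of_slope_eq_zero ⟨by linarith, h3⟩ hc0 (x := b / 2) (by linarith)
    have := Real.pi_pos
    gcongr
  · rw [tmcmcAcceptance_eq, hac]
    have h1 : Real.pi / 4 + 0.0958 ≤ Real.arctan c :=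
      arctan_left_lower.trans (Real.arctan_strictMono.monotone hc1)
    have h2 : Real.arctan c ≤ Real.pi / 4 + 0.0962 :=
      (Real.arctan_strictMono.monotone hc2).trans arctan_right_upper
    have hp := Real.pi_gt_d4
    have hp2 := Real.pi_lt_d4
    have he : 1 - 2 / Real.pi * Real.arctan c = (Real.pi - 2 * Real.arctan c) / Real.pi := by
      field_simp
    rw [he, Set.mem_Icc, le_div_iff₀ Real.pi_pos, div_le_iff₀ Real.pi_pos]
    constructor <;> linarith
end
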